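/- (Proposition 3.1.) Let k, l be integers with k ≤ l < 2k and k ≥ 1. Let H = (V, E) be a (k,l)-sparse multigraph with distinct vertices A, B ∈ V, and let e be an edge joining two vertices of V such that H' = (V, E ∪ {e}) is not (k,l)-sparse. Then r_AB(H) = r_AB(H'). -/

import Mathlib

/-!  Multigraphs: finite vertex set, finite multiset of edges (unordered pairs of
distinct vertices, parallel edges allowed, loops excluded). -/

/-- A multigraph on vertex type `V`: a finite set of vertices together with a
finite multiset of edges (unordered pairs of vertices). -/
structure MG (V : Type*) where
  verts : Finset V
  edges : Multiset (Sym2 V)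

namespace MG

variable {V : Type*} [DecidableEq V]

/-- Well-formedness: no loops, and every edge joins vertices of the graph. -/
def WF (G : MG V) : Prop :=
  (∀ e ∈ G.edges, ¬ e.IsDiag) ∧ (∀ e ∈ G.edges, e ∈ G.verts.sym2)

/-- `G'` is a subgraph of `G`: vertices a subset, edges a sub-multiset, and all
edges of `G'` join vertices of `G'`. -/
def IsSubgraph (G' G : MG V) : Prop :=
  G'.verts ⊆ G.verts ∧ G'.edges ≤ G.edges ∧ ∀ e ∈ G'.edges, e ∈ G'.verts.sym2

/-- `(k,l)`-sparsity: every subgraph with `n > 1` vertices and `m` edges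
satisfies `m ≤ k n - l`. -/
def Sparse (k l : ℤ) (G : MG V) : Prop :=
  ∀ G' : MG V, G'.IsSubgraph G → 1 < G'.verts.card →
    (Multiset.card G'.edges : ℤ) ≤ k * G'.verts.card - l

/-- `(k,l)`-redundant: not `(k,l)`-sparse. -/
def Redundant (k l : ℤ) (G : MG V) : Prop := ¬ Sparse k l G

/-- `(k,l)`-tight: sparse with exactly `k|V| - l` edges. -/
def Tight (k l : ℤ) (G : MG V) : Prop :=
  Sparse k l G ∧ (Multiset.card G.edges : ℤ) = k * G.verts.card - l

/-- `A` and `B` are `(k,l)`-rigidly connected in `G` if some `(k,l)`-tight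
subgraph of `G` contains both. -/
def RigidlyConnected (k l : ℤ) (G : MG V) (A B : V) : Prop :=
  ∃ T : MG V, T.IsSubgraph G ∧ Tight k l T ∧ A ∈ T.verts ∧ B ∈ T.verts

/-- `r_AB(H)`: the maximum of `|E_h| - k |V_h|` over all `(k,l)`-sparse
subgraphs `h` of `H` containing both `A` and `B`. -/
noncomputable def rAB (k l : ℤ) (H : MG V) (A B : V) : ℤ :=
  sSup {z : ℤ | ∃ h : MG V, h.IsSubgraph H ∧ Sparse k l h ∧
    A ∈ h.verts ∧ B ∈ h.verts ∧ z = (Multiset.card h.edges : ℤ) - k * h.verts.card}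

/-- `M_AB(H) = max (r_AB(H) + 2k, 0)`. -/
noncomputable def MAB (k l : ℤ) (H : MG V) (A B : V) : ℤ :=
  max (rAB k l H A B + 2 * k) 0

/-- The subgraph of `G` induced by a set `S` of vertices. -/
def induced (G : MG V) (S : Finset V) : MG V :=
  ⟨S, G.edges.filter (· ∈ S.sym2)⟩

/-- The intersection of `g` with the subgraph induced by `VH`: vertices
`g.verts ∩ VH` and the edges of `g` with both endpoints in `VH`. -/
def inter (g : MG V) (VH : Finset V) : MG V :=
  ⟨g.verts ∩ VH, g.edges.filter (· ∈ VH.sym2)⟩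

/-- The renormalizability condition: every edge of `G` with exactly one
endpoint in `VH` is incident to `A` or `B`. -/
def RenormCond (G : MG V) (VH : Finset V) (A B : V) : Prop :=
  ∀ e ∈ G.edges, (∃ v ∈ e, v ∈ VH) → (∃ v ∈ e, v ∉ VH) → (A ∈ e ∨ B ∈ e)

/-- The renormalized graph `R(G)`: delete all edges with both endpoints in
`VH`, delete the vertices of `VH` other than `A, B`, and insert
`M_AB(H)` parallel edges between `A` and `B`, where `H` is the subgraph
induced by `VH`. -/
noncomputable def renormG (k l : ℤ) (G : MG V) (VH : Finset V) (A B : V) : MG V :=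
  ⟨(G.verts \ VH) ∪ {A, B},
   G.edges.filter (fun e => e ∉ VH.sym2) +
     Multiset.replicate (MAB k l (G.induced VH) A B).toNat s(A, B)⟩

/-- Renormalization of a subgraph `g` of `G`: the part of `g` outside `VH` is
left unchanged, and its intersection `h` with the subgraph induced by `VH` is
replaced by `M_AB(h)` parallel `A`–`B` edges if both `A` and `B` belong to `g`,
and by no edges otherwise. -/
noncomputable def renormSub (k l : ℤ) (g : MG V) (VH : Finset V) (A B : V) : MG V :=
  ⟨(g.verts \ VH) ∪ (g.verts ∩ {A, B}),
   g.edges.filter (fun e => e ∉ VH.sym2) +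
     (if A ∈ g.verts ∧ B ∈ g.verts then
        Multiset.replicate (MAB k l (g.inter VH) A B).toNat s(A, B)
      else 0)⟩

/-- The maximum cardinality of a sub-multiset `E'` of the edges of `G` such
that `(V, E')` is `(k,l)`-sparse. -/
noncomputable def maxSparseCard (k l : ℤ) (G : MG V) : ℕ :=
  sSup {n : ℕ | ∃ E' : Multiset (Sym2 V), E' ≤ G.edges ∧
    Sparse k l (⟨G.verts, E'⟩ : MG V) ∧ Multiset.card E' = n}

/-- The number of `(k,l)`-redundant edges of `G`. -/
noncomputable def nred (k l : ℤ) (G : MG V) : ℕ :=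
  Multiset.card G.edges - maxSparseCard k l G

/-- Connectivity: any two vertices are joined by a path of edges. -/
def Connected (G : MG V) : Prop :=
  ∀ a ∈ G.verts, ∀ b ∈ G.verts,
    Relation.ReflTransGen (fun x y => s(x, y) ∈ G.edges) a b

end MG

/-! If `H` is sparse and `H + e` is not, then some tight subgraph `T` of `H` spans both endpoints
of `e`. Given a sparse subgraph `h` of `H + e` using `e`, replace it by `(h - e) ∪ T ⊆ H`. The
quantity `|E| - k|V|` is modular for unions and intersections, it equals `-l` on `T`, and it is at
most `-l` on `((h - e) ∩ T) + e`, a subgraph of `h` with at least two vertices because `e` is not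
a loop. So the replacement does not decrease it. -/

namespace MG

section

variable {V : Type*}

/-- The quantity `|E| - k|V|` whose maximum over sparse subgraphs through `A` and `B` is
`r_AB`. -/
def excess (k : ℤ) (G : MG V) : ℤ :=
  (Multiset.card G.edges : ℤ) - k * G.verts.card

/-- The graph `G + e`: one more copy of `e`, on the same vertices. -/
def addEdge (G : MG V) (e : Sym2 V) : MG V :=
  ⟨G.verts, e ::ₘ G.edges⟩

theorem excess_addEdge (k : ℤ) (G : MG V) (e : Sym2 V) :
    (G.addEdge e).excess k = G.excess k + 1 := by
  simp only [excess, addEdge, Multiset.card_cons, Nat.cast_add, Nat.cast_one]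
  ring

theorem one_lt_card_of_mem_sym2 {s : Finset V} {e : Sym2 V} (he : ¬ e.IsDiag)
    (hes : e ∈ s.sym2) : 1 < s.card := by
  induction e with
  | _ x y =>
    rw [Finset.mk_mem_sym2_iff] at hes
    exact Finset.one_lt_card.2 ⟨x, hes.1, y, hes.2, he⟩

theorem IsSubgraph.trans {G₁ G₂ G₃ : MG V} (h₁₂ : G₁.IsSubgraph G₂) (h₂₃ : G₂.IsSubgraph G₃) :
    G₁.IsSubgraph G₃ :=
  ⟨h₁₂.1.trans h₂₃.1, h₁₂.2.1.trans h₂₃.2.1, h₁₂.2.2⟩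

theorem IsSubgraph.trans_addEdge {G H : MG V} (h : G.IsSubgraph H) (e : Sym2 V) :
    G.IsSubgraph (H.addEdge e) :=
  ⟨h.1, h.2.1.trans (Multiset.le_cons_self _ _), h.2.2⟩

theorem IsSubgraph.addEdge {G H : MG V} {e : Sym2 V} (h : G.IsSubgraph H)
    (he : e ∈ G.verts.sym2) : (G.addEdge e).IsSubgraph (H.addEdge e) :=
  ⟨h.1, Multiset.cons_le_cons e h.2.1, Multiset.forall_mem_cons.2 ⟨he, h.2.2⟩⟩

theorem IsSubgraph.of_addEdge {G H : MG V} {e : Sym2 V} (h : G.IsSubgraph (H.addEdge e))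
    (he : e ∉ G.edges) : G.IsSubgraph H :=
  ⟨h.1, (Multiset.le_cons_of_notMem he).1 h.2.1, h.2.2⟩

theorem edgeless_isSubgraph (G : MG V) : IsSubgraph ⟨G.verts, 0⟩ G :=
  ⟨subset_rfl, Multiset.zero_le _, by simp⟩

theorem IsSubgraph.excess_le {G H : MG V} (h : G.IsSubgraph H) (k : ℤ) :
    G.excess k ≤ Multiset.card H.edges + |k| * H.verts.card := by
  have hE : (Multiset.card G.edges : ℤ) ≤ Multiset.card H.edges :=
    mod_cast Multiset.card_le_card h.2.1
  have hV : -(k * G.verts.card) ≤ |k| * H.verts.card :=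
    calc -(k * G.verts.card) = -k * G.verts.card := (neg_mul _ _).symm
      _ ≤ |k| * G.verts.card := by gcongr; exact neg_le_abs k
      _ ≤ |k| * H.verts.card := by gcongr; exact h.1
  rw [excess, sub_eq_add_neg]
  exact add_le_add hE hV

theorem Sparse.of_isSubgraph {k l : ℤ} {G H : MG V} (hH : Sparse k l H) (h : G.IsSubgraph H) :
    Sparse k l G :=
  fun G' hG' => hH G' (hG'.trans h)

theorem Sparse.excess_le {k l : ℤ} {G H : MG V} (hH : Sparse k l H) (h : G.IsSubgraph H)
    (hG : 1 < G.verts.card) : G.excess k ≤ -l := by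
  have := hH G h hG
  rw [excess]
  linarith

theorem Tight.excess_eq {k l : ℤ} {G : MG V} (hG : Tight k l G) : G.excess k = -l := by
  rw [excess, hG.2]
  ring

end

section

variable {V : Type*} [DecidableEq V]

/-- The graph `G - e`: one copy of `e`, if there is any, is removed. -/
def deleteEdge (G : MG V) (e : Sym2 V) : MG V :=
  ⟨G.verts, G.edges.erase e⟩

/-- The union of two multigraphs; an edge gets the larger of its two multiplicities. -/
instance : Max (MG V) :=
  ⟨fun G H => ⟨G.verts ∪ H.verts, G.edges ∪ H.edges⟩⟩

/-- The intersection of two multigraphs; an edge gets the smaller of its two multiplicities. -/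
instance : Min (MG V) :=
  ⟨fun G H => ⟨G.verts ∩ H.verts, G.edges ∩ H.edges⟩⟩

theorem deleteEdge_addEdge {G : MG V} {e : Sym2 V} (he : e ∈ G.edges) :
    (G.deleteEdge e).addEdge e = G := by
  simp only [addEdge, deleteEdge, Multiset.cons_erase he]

theorem IsSubgraph.deleteEdge {G H : MG V} {e : Sym2 V} (h : G.IsSubgraph (H.addEdge e)) :
    (G.deleteEdge e).IsSubgraph H :=
  ⟨h.1, Multiset.erase_le_iff_le_cons.2 h.2.1,
    fun f hf => h.2.2 f (Multiset.mem_of_mem_erase hf)⟩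

theorem mem_sym2_inter {s t : Finset V} {e : Sym2 V} (hs : e ∈ s.sym2) (ht : e ∈ t.sym2) :
    e ∈ (s ∩ t).sym2 := by
  rw [Finset.mem_sym2_iff] at *
  exact fun a ha => Finset.mem_inter.2 ⟨hs a ha, ht a ha⟩

theorem IsSubgraph.sup {G₁ G₂ H : MG V} (h₁ : G₁.IsSubgraph H) (h₂ : G₂.IsSubgraph H) :
    (G₁ ⊔ G₂).IsSubgraph H := by
  refine ⟨Finset.union_subset h₁.1 h₂.1, Multiset.union_le h₁.2.1 h₂.2.1, fun f hf => ?_⟩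
  rcases Multiset.mem_union.1 hf with hf | hf
  · exact Finset.sym2_mono Finset.subset_union_left (h₁.2.2 f hf)
  · exact Finset.sym2_mono Finset.subset_union_right (h₂.2.2 f hf)

theorem IsSubgraph.inf_left {G₁ G₂ H₁ H₂ : MG V} (h₁ : G₁.IsSubgraph H₁)
    (h₂ : G₂.IsSubgraph H₂) : (G₁ ⊓ G₂).IsSubgraph G₁ := by
  refine ⟨Finset.inter_subset_left, Multiset.inter_le_left, fun f hf => ?_⟩
  obtain ⟨hf₁, hf₂⟩ := Multiset.mem_inter.1 hf
  exact mem_sym2_inter (h₁.2.2 f hf₁) (h₂.2.2 f hf₂)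

theorem excess_sup_add_excess_inf (k : ℤ) (G H : MG V) :
    (G ⊔ H).excess k + (G ⊓ H).excess k = G.excess k + H.excess k := by
  have hE : (Multiset.card (G ⊔ H).edges : ℤ) + Multiset.card (G ⊓ H).edges =
      Multiset.card G.edges + Multiset.card H.edges := by
    have := congrArg Multiset.card (Multiset.union_add_inter G.edges H.edges)
    rw [Multiset.card_add, Multiset.card_add] at this
    exact_mod_cast this
  have hV : ((G ⊔ H).verts.card : ℤ) + (G ⊓ H).verts.card = G.verts.card + H.verts.card :=
    mod_cast Finset.card_union_add_card_inter G.verts H.verts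
  simp only [excess]
  linear_combination hE - k * hV

theorem Tight.excess_addEdge_le_excess_sup {k l : ℤ} {G T H : MG V} {e : Sym2 V}
    (hT : Tight k l T) (hTH : T.IsSubgraph H) (hGH : G.IsSubgraph H)
    (hGe : Sparse k l (G.addEdge e)) (he : ¬ e.IsDiag) (heG : e ∈ G.verts.sym2)
    (heT : e ∈ T.verts.sym2) : (G.addEdge e).excess k ≤ (G ⊔ T).excess k := by
  have heGT : e ∈ (G ⊓ T).verts.sym2 := mem_sym2_inter heG heT
  have hinf : ((G ⊓ T).addEdge e).excess k ≤ -l :=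
    hGe.excess_le ((hGH.inf_left hTH).addEdge heGT) (one_lt_card_of_mem_sym2 he heGT)
  have hmod := excess_sup_add_excess_inf k G T
  rw [excess_addEdge] at hinf ⊢
  rw [hT.excess_eq] at hmod
  linarith

end

section

variable {V : Type*} {k l : ℤ} {H : MG V}

theorem Sparse.exists_tight_of_not_sparse_addEdge {e : Sym2 V} (hH : Sparse k l H)
    (hHe : ¬ Sparse k l (H.addEdge e)) :
    ∃ T : MG V, T.IsSubgraph H ∧ Tight k l T ∧ e ∈ T.verts.sym2 := by
  classical
  unfold Sparse at hHe
  push Not at hHe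
  obtain ⟨G, hG, hGcard, hlt⟩ := hHe
  have heG : e ∈ G.edges := by
    by_contra heG
    exact hlt.not_ge (hH G (hG.of_addEdge heG) hGcard)
  refine ⟨G.deleteEdge e, hG.deleteEdge, ⟨hH.of_isSubgraph hG.deleteEdge, ?_⟩, hG.2.2 e heG⟩
  have hle := hH _ hG.deleteEdge hGcard
  have hcard := Multiset.card_erase_add_one heG
  simp only [deleteEdge] at hle ⊢
  lia

theorem Sparse.exists_isSubgraph_excess_le {h : MG V} {e : Sym2 V}
    (hH : Sparse k l H) (he : ¬ e.IsDiag) (hHe : ¬ Sparse k l (H.addEdge e))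
    (hsub : h.IsSubgraph (H.addEdge e)) (hsp : Sparse k l h) :
    ∃ g : MG V, g.IsSubgraph H ∧ h.verts ⊆ g.verts ∧ h.excess k ≤ g.excess k := by
  classical
  by_cases heh : e ∈ h.edges
  · obtain ⟨T, hTH, hT, heT⟩ := hH.exists_tight_of_not_sparse_addEdge hHe
    refine ⟨h.deleteEdge e ⊔ T, hsub.deleteEdge.sup hTH, Finset.subset_union_left, ?_⟩
    rw [← deleteEdge_addEdge heh] at hsp
    have hle := hT.excess_addEdge_le_excess_sup hTH hsub.deleteEdge hsp he (hsub.2.2 e heh) heT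
    rwa [deleteEdge_addEdge heh] at hle
  · exact ⟨h, hsub.of_addEdge heh, subset_rfl, le_rfl⟩

variable {A B : V}

/-- The set `S_AB(H)` of `(k,l)`-sparse subgraphs of `H` containing both `A` and `B`. -/
def sparseSubgraphs (k l : ℤ) (H : MG V) (A B : V) : Set (MG V) :=
  {h | h.IsSubgraph H ∧ Sparse k l h ∧ A ∈ h.verts ∧ B ∈ h.verts}

theorem Sparse.sparseSubgraphs_nonempty (hH : Sparse k l H) (hA : A ∈ H.verts)
    (hB : B ∈ H.verts) : (sparseSubgraphs k l H A B).Nonempty :=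
  ⟨_, edgeless_isSubgraph H, hH.of_isSubgraph (edgeless_isSubgraph H), hA, hB⟩

theorem sparseSubgraphs_subset_addEdge (k l : ℤ) (H : MG V) (A B : V) (e : Sym2 V) :
    sparseSubgraphs k l H A B ⊆ sparseSubgraphs k l (H.addEdge e) A B :=
  fun _ hh => ⟨hh.1.trans_addEdge e, hh.2⟩

theorem bddAbove_excess_sparseSubgraphs (k l : ℤ) (H : MG V) (A B : V) :
    BddAbove (excess k '' sparseSubgraphs k l H A B) :=
  ⟨_, Set.forall_mem_image.2 fun _ hh => hh.1.excess_le k⟩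

theorem rAB_eq_sSup_image (k l : ℤ) (H : MG V) (A B : V) :
    rAB k l H A B = sSup (excess k '' sparseSubgraphs k l H A B) := by
  simp only [rAB, sparseSubgraphs, excess, Set.image, Set.mem_ofPred_eq, and_assoc, eq_comm]

theorem excess_le_rAB {h : MG V} (hh : h ∈ sparseSubgraphs k l H A B) :
    h.excess k ≤ rAB k l H A B := by
  rw [rAB_eq_sSup_image]
  exact le_csSup (bddAbove_excess_sparseSubgraphs k l H A B) (Set.mem_image_of_mem _ hh)

theorem exists_excess_eq_rAB (hne : (sparseSubgraphs k l H A B).Nonempty) :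
    ∃ h ∈ sparseSubgraphs k l H A B, h.excess k = rAB k l H A B := by
  rw [rAB_eq_sSup_image]
  exact Int.csSup_mem (hne.image _) (bddAbove_excess_sparseSubgraphs k l H A B)

end

end MG

theorem rAB_add_redundant_edge_general {V : Type*} (k l : ℤ) (H : MG V)
    (hsp : MG.Sparse k l H) (A B : V) (hA : A ∈ H.verts) (hB : B ∈ H.verts)
    (e : Sym2 V) (he : ¬ e.IsDiag) (hred : ¬ MG.Sparse k l (H.addEdge e)) :
    MG.rAB k l H A B = MG.rAB k l (H.addEdge e) A B := by
  have hne := hsp.sparseSubgraphs_nonempty hA hB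
  have hsub := MG.sparseSubgraphs_subset_addEdge k l H A B e
  apply le_antisymm
  · obtain ⟨h, hh, hmax⟩ := MG.exists_excess_eq_rAB hne
    exact hmax ▸ MG.excess_le_rAB (hsub hh)
  · obtain ⟨h, ⟨hhH, hhsp, hAh, hBh⟩, hmax⟩ := MG.exists_excess_eq_rAB (hne.mono hsub)
    obtain ⟨g, hgH, hhg, hle⟩ := hsp.exists_isSubgraph_excess_le he hred hhH hhsp
    rw [← hmax]
    exact hle.trans (MG.excess_le_rAB ⟨hgH, hsp.of_isSubgraph hgH, hhg hAh, hhg hBh⟩)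

/-- Proposition 3.1: if `H` is `(k,l)`-sparse (`k ≤ l < 2k`, `k ≥ 1`) with
distinct vertices `A, B`, and adding an edge `e` makes it non-sparse, then
`r_AB(H) = r_AB(H')` where `H'` is `H` with the extra edge `e`. -/
theorem rAB_add_redundant_edge {V : Type*} [DecidableEq V] (k l : ℤ)
    (hk : 1 ≤ k) (hkl : k ≤ l) (hl2k : l < 2 * k)
    (H : MG V) (hWF : H.WF) (hsp : MG.Sparse k l H)
    (A B : V) (hA : A ∈ H.verts) (hB : B ∈ H.verts) (hAB : A ≠ B)
    (e : Sym2 V) (he : ¬ e.IsDiag) (heV : e ∈ H.verts.sym2)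
    (hred : ¬ MG.Sparse k l (⟨H.verts, e ::ₘ H.edges⟩ : MG V)) :
    MG.rAB k l H A B = MG.rAB k l (⟨H.verts, e ::ₘ H.edges⟩ : MG V) A B :=
  rAB_add_redundant_edge_general k l H hsp A B hA hB e he hred
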